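/- arXiv:1812.09772 — 2 statements merged into one kernel-verified Lean document; each statement's English description precedes it below -/
import Mathlib

section
/- Let Γ be a group of affine transformations of ℝ³ such that the linear part of every element of Γ is an integer upper unitriangular matrix (an upper triangular integer matrix with all diagonal entries equal to 1), and suppose Γ acts freely and properly discontinuously on ℝ³ with compact orbit space ℝ³/Γ. Let T be the translation subgroup of Γ (the subgroup of pure translations belonging to Γ), and assume the vector parts of the elements of T span a 2-dimensional subspace of ℝ³. Then there exists g ∈ Γ such that Γ is generated by T together with g. -/
open Matrix

noncomputable section

/-- ℝ³ as the space of triples of reals. -/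
abbrev E3 : Type := Fin 3 → ℝ

/-- The group of invertible affine transformations of ℝ³. -/
abbrev AffT : Type := E3 ≃ᵃ[ℝ] E3

/-- `γ` is the affine transformation `x ↦ A x + v` with linear part `A` and vector part `v`. -/
def HasForm (γ : AffT) (A : Matrix (Fin 3) (Fin 3) ℝ) (v : E3) : Prop :=
  ∀ x, γ x = A.mulVec x + v

/-- `γ` is the pure translation by the vector `v`. -/
def IsTranslationBy (γ : AffT) (v : E3) : Prop :=
  ∀ x, γ x = x + v

/-- The group `Γ` acts freely on ℝ³. -/
def IsFreeAction (Γ : Subgroup AffT) : Prop :=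
  ∀ γ ∈ Γ, (∃ x : E3, γ x = x) → γ = 1

/-- The group `Γ` acts properly discontinuously on ℝ³. -/
def IsProperlyDiscontinuous (Γ : Subgroup AffT) : Prop :=
  ∀ K L : Set E3, IsCompact K → IsCompact L →
    {γ : AffT | γ ∈ Γ ∧ ((γ '' K) ∩ L).Nonempty}.Finite

/-- The orbit equivalence relation of `Γ` on ℝ³. -/
def orbitSetoid (Γ : Subgroup AffT) : Setoid E3 where
  r x y := ∃ γ ∈ Γ, γ x = y
  iseqv := by
    constructor
    · intro x; exact ⟨1, Γ.one_mem, rfl⟩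
    · rintro x y ⟨γ, hγ, h⟩
      exact ⟨γ⁻¹, Γ.inv_mem hγ, by rw [← h]; exact γ.symm_apply_apply x⟩
    · rintro x y z ⟨γ, hγ, h⟩ ⟨δ, hδ, h'⟩
      exact ⟨δ * γ, Γ.mul_mem hδ hγ, by simp [← h', ← h]⟩

/-- The orbit space `ℝ³/Γ`, equipped with the quotient topology, is compact. -/
def HasCompactQuotient (Γ : Subgroup AffT) : Prop :=
  CompactSpace (Quotient (orbitSetoid Γ))

/-!
Let `V` be the span of the translation vectors, of codimension at most one, and `f` a linear form
with kernel `V`. Conjugation by `Γ` preserves the translations, so a linear part of `Γ` multiplies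
`f` by a scalar, and this scalar is `1` because the linear part is unipotent. Hence `γ ↦ f (γ 0)` is
a homomorphism `Γ → ℝ`.

The translation vectors are cobounded in `V`, so modulo translations only finitely many `γ ∈ Γ` move
the origin into a given slab `|f| ≤ r`. This makes the image of the homomorphism discrete, hence
cyclic, and gives every element of its kernel a linear part of finite order; a unipotent map of
finite order is the identity, so the kernel consists of translations. Therefore any `g` mapping to a
generator of the image generates `Γ` together with the translations.
-/

open Module LinearMap
open scoped Polynomial

section LinearAlgebra

variable {K V : Type*} [Field K] [AddCommGroup V] [Module K V]

lemma isNilpotent_sub_one_of_isUpperTriangular {R n : Type*} [CommRing R] [DecidableEq n]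
    [Fintype n] [LinearOrder n] {M : Matrix n n R} (hM : M.IsUpperTriangular)
    (hdiag : ∀ i, M i i = 1) : IsNilpotent (M - 1) := by
  have hchar : M.charpoly = (Polynomial.X - 1) ^ Fintype.card n := by
    simp [M.charpoly_of_isUpperTriangular hM, hdiag]
  exact ⟨Fintype.card n, by simpa [hchar] using M.aeval_self_charpoly⟩

lemma eq_one_of_isNilpotent_sub_one_of_isOfFinOrder [CharZero K] {L : End K V}
    (hL : IsNilpotent (L - 1)) (hfin : IsOfFinOrder L) : L = 1 := by
  obtain ⟨n, hn, hpow⟩ := isOfFinOrder_iff_pow_eq_one.mp hfin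
  have hsep : (Polynomial.X ^ n - 1 : K[X]).Separable :=
    Polynomial.X_pow_sub_one_separable_iff.mpr (Nat.cast_ne_zero.mpr hn.ne')
  have hss : L.IsSemisimple :=
    End.isSemisimple_of_squarefree_aeval_eq_zero hsep.squarefree (by simp [hpow])
  have hss_sub : (L - 1).IsSemisimple := by
    simpa using End.isSemisimple_sub_algebraMap_iff (μ := (1 : K)).mpr hss
  exact sub_eq_zero.mp (End.eq_zero_of_isNilpotent_isSemisimple hL hss_sub)

lemma dual_comp_eq_self_of_isNilpotent_sub_one {L : End K V} {f : Dual K V}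
    (hL : IsNilpotent (L - 1)) (hker : ker f ≤ ker (f ∘ₗ L)) : f ∘ₗ L = f := by
  obtain ⟨c, hc⟩ : ∃ c : K, c • f = f ∘ₗ L := by
    have hspan := mem_span_of_iInf_ker_le_ker (L := fun _ : Unit => f) (by simpa using hker)
    simpa [Submodule.mem_span_singleton] using hspan
  have hpow (n : ℕ) : f ∘ₗ (L - 1) ^ n = (c - 1) ^ n • f := by
    induction n with
    | zero => ext; simp
    | succ n ih =>
      calc f ∘ₗ (L - 1) ^ (n + 1) = (f ∘ₗ (L - 1) ^ n) ∘ₗ (L - 1) := by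
            rw [pow_succ, End.mul_eq_comp, LinearMap.comp_assoc]
        _ = (c - 1) ^ n • (f ∘ₗ L - f) := by rw [ih, smul_comp, comp_sub, End.one_eq_id, comp_id]
        _ = (c - 1) ^ (n + 1) • f := by rw [← hc]; module
  obtain ⟨n, hn⟩ := hL
  have hzero : (c - 1) ^ n • f = 0 := by rw [← hpow, hn, comp_zero]
  rcases smul_eq_zero.mp hzero with hc_one | rfl
  · rw [← hc, sub_eq_zero.mp (eq_zero_of_pow_eq_zero hc_one), one_smul]
  · exact zero_comp L

lemma exists_dual_ker_eq [FiniteDimensional K V] {W : Submodule K V}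
    (hW : finrank K V ≤ finrank K W + 1) : ∃ f : Dual K V, ker f = W := by
  have hquot : finrank K (V ⧸ W) ≤ 1 := by
    have := W.finrank_quotient_add_finrank
    omega
  obtain ⟨g, hg⟩ : ∃ g : Dual K (V ⧸ W), Function.Injective g := by
    rw [← lift_rank_le_iff_exists_linearMap, ← finrank_eq_rank]
    simpa [← finrank_eq_rank] using hquot
  exact ⟨g ∘ₗ W.mkQ, by rw [ker_comp_of_ker_eq_bot _ (ker_eq_bot.mpr hg), W.ker_mkQ]⟩

lemma exists_forall_sub_smul_mem_ker (f : Dual K V) : ∃ w, ∀ x, x - f x • w ∈ ker f := by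
  rcases eq_or_ne f 0 with rfl | hf
  · simp
  · obtain ⟨w, hw⟩ := LinearMap.surjective hf 1
    exact ⟨w, fun x => by simp [hw]⟩

end LinearAlgebra

lemma exists_ker_sup_zpowers_eq_top {G N : Type*} [Group G] [Group N] {φ : G →* N} {b : N}
    (hb : φ.range = Subgroup.closure {b}) : ∃ g, φ.ker ⊔ Subgroup.zpowers g = ⊤ := by
  obtain ⟨g, rfl⟩ : b ∈ φ.range := hb ▸ Subgroup.subset_closure rfl
  have hmap : (Subgroup.zpowers g).map φ = (⊤ : Subgroup G).map φ := by
    rw [φ.map_zpowers, ← φ.range_eq_map, hb, Subgroup.zpowers_eq_closure]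
  exact ⟨g, by simpa [sup_comm] using Subgroup.map_eq_map_iff.mp hmap⟩

lemma exists_eq_closure_singleton_of_finite_inter {A : Type*} [AddCommGroup A] [LinearOrder A]
    [IsOrderedAddMonoid A] [Archimedean A] [TopologicalSpace A] [OrderTopology A]
    [DenselyOrdered A] [Nontrivial A] {H : AddSubgroup A} {U : Set A} (hU : IsOpen U)
    (hne : U.Nonempty) (hfin : (U ∩ H).Finite) : ∃ a, H = AddSubgroup.closure {a} := by
  refine H.dense_or_cyclic.resolve_left fun hdense => ?_
  obtain ⟨x, hxU, hxH, hx⟩ := (hdense.sdiff_finite hfin).inter_open_nonempty U hU hne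
  exact hx ⟨hxU, hxH⟩

section Slab

variable {E : Type*} [NormedAddCommGroup E] [NormedSpace ℝ E] [FiniteDimensional ℝ E]

lemma exists_forall_mem_span_norm_sub_le (S : AddSubgroup E) :
    ∃ C : ℝ, ∀ x ∈ Submodule.span ℝ (S : Set E), ∃ s ∈ S, ‖x - s‖ ≤ C := by
  obtain ⟨b, hbS, hspan, hli⟩ := exists_linearIndependent ℝ (S : Set E)
  lift b to Finset E using hli.setFinite
  refine ⟨∑ v ∈ b, ‖v‖, fun x hx => ?_⟩
  obtain ⟨c, -, rfl⟩ := Submodule.mem_span_finset.mp (hspan ▸ hx)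
  refine ⟨∑ v ∈ b, ⌊c v⌋ • v, S.sum_mem fun v hv => S.zsmul_mem (hbS hv) _, ?_⟩
  have hfract : ∑ v ∈ b, c v • v - ∑ v ∈ b, ⌊c v⌋ • v = ∑ v ∈ b, Int.fract (c v) • v := by
    simp only [← Int.cast_smul_eq_zsmul ℝ, ← Finset.sum_sub_distrib, ← sub_smul,
      Int.self_sub_floor]
  rw [hfract]
  refine norm_sum_le_of_le _ fun v _ => ?_
  rw [norm_smul, Real.norm_of_nonneg (Int.fract_nonneg _)]
  exact mul_le_of_le_one_left (norm_nonneg v) (Int.fract_lt_one _).le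

lemma exists_forall_slab_norm_sub_le {S : AddSubgroup E} {f : Dual ℝ E}
    (hf : ker f ≤ Submodule.span ℝ (S : Set E)) (r : ℝ) :
    ∃ C : ℝ, ∀ x, |f x| ≤ r → ∃ s ∈ S, ‖x - s‖ ≤ C := by
  obtain ⟨C, hC⟩ := exists_forall_mem_span_norm_sub_le S
  obtain ⟨w, hw⟩ := exists_forall_sub_smul_mem_ker f
  refine ⟨C + r * ‖w‖, fun x hx => ?_⟩
  obtain ⟨s, hs, hxs⟩ := hC _ (hf (hw x))
  refine ⟨s, hs, ?_⟩
  calc ‖x - s‖ = ‖(x - f x • w - s) + f x • w‖ := by congr 1; abel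
    _ ≤ ‖x - f x • w - s‖ + |f x| * ‖w‖ := by
      simpa [norm_smul] using norm_add_le (x - f x • w - s) (f x • w)
    _ ≤ C + r * ‖w‖ := by gcongr

end Slab

section Translations

variable {K V : Type*} [Field K] [AddCommGroup V] [Module K V]

/-- The translation subgroup of a group of affine transformations, encoded as its elements with
trivial linear part. -/
def translationSubgroup (Γ : Subgroup (V ≃ᵃ[K] V)) : Subgroup (V ≃ᵃ[K] V) :=
  Γ ⊓ AffineEquiv.linearHom.ker

/-- The additive group of the vectors by which a group of affine transformations translates. -/
def translationVectors (Γ : Subgroup (V ≃ᵃ[K] V)) : AddSubgroup V :=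
  Subgroup.toAddSubgroup' (Γ.comap (AffineEquiv.constVAddHom K V))

variable {Γ : Subgroup (V ≃ᵃ[K] V)} {γ : V ≃ᵃ[K] V}

lemma mem_translationVectors {v : V} :
    v ∈ translationVectors Γ ↔ AffineEquiv.constVAdd K V v ∈ Γ :=
  Iff.rfl

lemma affineEquiv_apply_eq_linear_add (γ : V ≃ᵃ[K] V) (x : V) : γ x = γ.linear x + γ 0 := by
  simpa using γ.map_vadd 0 x

lemma linear_mem_translationVectors (hγ : γ ∈ Γ) {v : V} (hv : v ∈ translationVectors Γ) :
    γ.linear v ∈ translationVectors Γ := by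
  have hconj : AffineEquiv.constVAdd K V (γ.linear v) =
      γ * AffineEquiv.constVAdd K V v * γ⁻¹ := by
    rw [eq_mul_inv_iff_mul_eq]
    ext x
    simp [affineEquiv_apply_eq_linear_add γ (v + x), affineEquiv_apply_eq_linear_add γ x,
      add_assoc]
  rw [mem_translationVectors, hconj]
  exact Γ.mul_mem (Γ.mul_mem hγ hv) (Γ.inv_mem hγ)

/-- The homomorphism `γ ↦ f (γ 0)`: for `f` invariant under all linear parts, `γ` acts on the line
`V ⧸ ker f` as the translation by this amount. -/
def translationHom (f : Dual K V) (hf : ∀ γ ∈ Γ, f ∘ₗ γ.linear = f) : Γ →* Multiplicative K where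
  toFun γ := .ofAdd (f (γ.1 0))
  map_one' := by simp
  map_mul' γ δ := by
    have hδ : f (γ.1.linear (δ.1 0)) = f (δ.1 0) := LinearMap.congr_fun (hf γ.1 γ.2) _
    simp [affineEquiv_apply_eq_linear_add γ.1 (δ.1 0), hδ, mul_comm]

lemma dual_comp_linear_eq_self {f : Dual K V}
    (hker : ker f = Submodule.span K (translationVectors Γ : Set V)) (hγ : γ ∈ Γ)
    (hunip : IsNilpotent ((γ.linear : V →ₗ[K] V) - 1)) : f ∘ₗ γ.linear = f := by
  refine dual_comp_eq_self_of_isNilpotent_sub_one hunip ?_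
  rw [ker_comp, hker, Submodule.span_le]
  exact fun v hv => Submodule.subset_span (linear_mem_translationVectors hγ hv)

end Translations

section ProperAction

variable {E : Type*} [NormedAddCommGroup E] [NormedSpace ℝ E] [FiniteDimensional ℝ E]
  {Γ : Subgroup (E ≃ᵃ[ℝ] E)} {f : Dual ℝ E}

-- Composing `γ` with a translation in `Γ` changes neither `f (γ 0)` nor `γ.linear`, and can be used
-- to bring `γ 0` from the slab into a fixed ball.
lemma finite_image_slab (hfin : ∀ r : ℝ, {γ : E ≃ᵃ[ℝ] E | γ ∈ Γ ∧ ‖γ 0‖ ≤ r}.Finite)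
    (hker : ker f = Submodule.span ℝ (translationVectors Γ : Set E)) (r : ℝ) :
    ((fun γ : E ≃ᵃ[ℝ] E => (f (γ 0), γ.linear)) '' {γ | γ ∈ Γ ∧ |f (γ 0)| ≤ r}).Finite := by
  obtain ⟨C, hC⟩ := exists_forall_slab_norm_sub_le hker.le r
  refine ((hfin C).image fun γ => (f (γ 0), γ.linear)).subset ?_
  rintro _ ⟨γ, ⟨hγ, hγr⟩, rfl⟩
  obtain ⟨v, hv, hvC⟩ := hC (γ 0) hγr
  have hfv : f v = 0 := hker.ge (Submodule.subset_span hv)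
  refine ⟨AffineEquiv.constVAdd ℝ E (-v) * γ, ⟨Γ.mul_mem (neg_mem hv) hγ, ?_⟩, ?_⟩
  · simpa [neg_add_eq_sub] using hvC
  · ext x
    · simp [hfv]
    · rfl

lemma exists_range_translationHom_eq_closure (hf : ∀ γ ∈ Γ, f ∘ₗ γ.linear = f)
    (hfin : ∀ r : ℝ, {γ : E ≃ᵃ[ℝ] E | γ ∈ Γ ∧ ‖γ 0‖ ≤ r}.Finite)
    (hker : ker f = Submodule.span ℝ (translationVectors Γ : Set E)) :
    ∃ b, (translationHom f hf).range = Subgroup.closure {b} := by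
  have hH : (Set.Ioo (-1) 1 ∩
      (Subgroup.toAddSubgroup' (translationHom f hf).range : Set ℝ)).Finite := by
    refine ((finite_image_slab hfin hker 1).image Prod.fst).subset ?_
    rintro _ ⟨hr, γ, rfl⟩
    exact ⟨_, ⟨γ, ⟨γ.2, (abs_lt.mpr hr).le⟩, rfl⟩, rfl⟩
  obtain ⟨b, hb⟩ := exists_eq_closure_singleton_of_finite_inter isOpen_Ioo (by simp) hH
  refine ⟨.ofAdd b, Subgroup.toAddSubgroup'.injective (hb.trans ?_)⟩
  rw [Subgroup.toAddSubgroup'_closure]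
  rfl

lemma map_subtype_ker_translationHom_le (hf : ∀ γ ∈ Γ, f ∘ₗ γ.linear = f)
    (hunip : ∀ γ ∈ Γ, IsNilpotent ((γ.linear : E →ₗ[ℝ] E) - 1))
    (hfin : ∀ r : ℝ, {γ : E ≃ᵃ[ℝ] E | γ ∈ Γ ∧ ‖γ 0‖ ≤ r}.Finite)
    (hker : ker f = Submodule.span ℝ (translationVectors Γ : Set E)) :
    (translationHom f hf).ker.map Γ.subtype ≤ translationSubgroup Γ := by
  rintro _ ⟨γ, hγ, rfl⟩
  have hpow (n : ℕ) : f ((γ ^ n).1 0) = 0 := pow_mem hγ n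
  have hpowers : (Submonoid.powers γ.1.linear : Set (E ≃ₗ[ℝ] E)).Finite := by
    refine ((finite_image_slab hfin hker 0).image Prod.snd).subset ?_
    rintro _ ⟨n, rfl⟩
    exact ⟨_, ⟨(γ ^ n).1, ⟨(γ ^ n).2, by rw [hpow, abs_zero]⟩, rfl⟩,
      map_pow AffineEquiv.linearHom γ.1 n⟩
  have hord : IsOfFinOrder (γ.1.linear : E →ₗ[ℝ] E) :=
    LinearEquiv.automorphismGroup.toLinearMapMonoidHom.isOfFinOrder (finite_powers.mp hpowers)
  exact ⟨γ.2, LinearEquiv.toLinearMap_injective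
    (eq_one_of_isNilpotent_sub_one_of_isOfFinOrder (hunip _ γ.2) hord)⟩

end ProperAction

theorem stmt_13_general {E : Type*} [NormedAddCommGroup E] [NormedSpace ℝ E]
    [FiniteDimensional ℝ E] (Γ : Subgroup (E ≃ᵃ[ℝ] E))
    (hunip : ∀ γ ∈ Γ, IsNilpotent ((γ.linear : E →ₗ[ℝ] E) - 1))
    (hfin : ∀ r : ℝ, {γ : E ≃ᵃ[ℝ] E | γ ∈ Γ ∧ ‖γ 0‖ ≤ r}.Finite)
    (hcodim : finrank ℝ E ≤
      finrank ℝ (Submodule.span ℝ (translationVectors Γ : Set E)) + 1) :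
    ∃ g ∈ Γ, Γ = Subgroup.closure (translationSubgroup Γ ∪ {g}) := by
  obtain ⟨f, hker⟩ := exists_dual_ker_eq hcodim
  have hf (γ) (hγ : γ ∈ Γ) : f ∘ₗ γ.linear = f := dual_comp_linear_eq_self hker hγ (hunip γ hγ)
  obtain ⟨b, hb⟩ := exists_range_translationHom_eq_closure hf hfin hker
  obtain ⟨g, hg⟩ := exists_ker_sup_zpowers_eq_top hb
  refine ⟨g, g.2, le_antisymm ?_ ?_⟩
  · calc Γ = (translationHom f hf).ker.map Γ.subtype ⊔ Subgroup.zpowers g.1 := by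
          simpa [Subgroup.map_sup, MonoidHom.map_zpowers, ← MonoidHom.range_eq_map]
            using (congrArg (Subgroup.map Γ.subtype) hg).symm
      _ ≤ translationSubgroup Γ ⊔ Subgroup.zpowers g.1 :=
          sup_le_sup_right (map_subtype_ker_translationHom_le hf hunip hfin hker) _
      _ = Subgroup.closure (translationSubgroup Γ ∪ {g.1}) := by
          rw [Subgroup.closure_union, Subgroup.closure_eq, Subgroup.zpowers_eq_closure]
  · rw [Subgroup.closure_le]
    exact Set.union_subset inf_le_left (by simp)

lemma isUpperTriangular_fin_three {R : Type*} [Zero R] (a b c d e f : R) :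
    !![a, b, c; 0, d, e; 0, 0, f].IsUpperTriangular := by
  intro i j hij
  fin_cases i <;> fin_cases j <;> simp_all

lemma HasForm.linear_eq {γ : AffT} {A : Matrix (Fin 3) (Fin 3) ℝ} {v : E3} (h : HasForm γ A v) :
    (γ.linear : E3 →ₗ[ℝ] E3) = A.toLin' := by
  have h_zero : γ 0 = v := by simpa using h 0
  refine LinearMap.ext fun x => add_right_cancel (b := v) ?_
  simpa [h_zero, affineEquiv_apply_eq_linear_add γ x] using h x

lemma HasForm.isNilpotent_linear_sub_one {γ : AffT} {A : Matrix (Fin 3) (Fin 3) ℝ} {v : E3}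
    (h : HasForm γ A v) (hA : A.IsUpperTriangular) (hdiag : ∀ i, A i i = 1) :
    IsNilpotent ((γ.linear : E3 →ₗ[ℝ] E3) - 1) := by
  rw [h.linear_eq]
  have hnil := (isNilpotent_sub_one_of_isUpperTriangular hA hdiag).map Matrix.toLinAlgEquiv'
  rwa [map_sub, map_one] at hnil

lemma isTranslationBy_iff {γ : AffT} {v : E3} :
    IsTranslationBy γ v ↔ γ = AffineEquiv.constVAdd ℝ E3 v := by
  simp [IsTranslationBy, AffineEquiv.ext_iff, add_comm]

lemma setOf_isTranslationBy_eq_translationVectors (Γ : Subgroup AffT) :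
    {v : E3 | ∃ γ ∈ Γ, IsTranslationBy γ v} = translationVectors Γ := by
  ext v
  simp [isTranslationBy_iff, mem_translationVectors]

lemma setOf_exists_isTranslationBy_eq_translationSubgroup (Γ : Subgroup AffT) :
    {γ : AffT | γ ∈ Γ ∧ ∃ v : E3, IsTranslationBy γ v} = translationSubgroup Γ := by
  ext γ
  refine and_congr_right fun _ => ⟨?_, fun hγ => ⟨γ 0, fun x => ?_⟩⟩
  · rintro ⟨v, hv⟩
    rw [isTranslationBy_iff.mp hv]
    rfl
  · have hlin : γ.linear = 1 := hγ
    rw [affineEquiv_apply_eq_linear_add γ x, hlin]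
    rfl

lemma IsProperlyDiscontinuous.finite_norm_apply_zero_le {Γ : Subgroup AffT}
    (hΓ : IsProperlyDiscontinuous Γ) (r : ℝ) : {γ : AffT | γ ∈ Γ ∧ ‖γ 0‖ ≤ r}.Finite := by
  simpa using hΓ {0} (Metric.closedBall 0 r) isCompact_singleton (isCompact_closedBall 0 r)

/-- if the translation subgroup `T` of such a group `Γ` has vector parts spanning a
2-dimensional subspace, then `Γ` is generated by `T` together with a single element. -/
theorem stmt_13 (Γ : Subgroup AffT)
    (hlin : ∀ γ ∈ Γ, ∃ (a b c : ℤ) (v : E3),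
      HasForm γ !![1, (a : ℝ), (b : ℝ); 0, 1, (c : ℝ); 0, 0, 1] v)
    (hfree : IsFreeAction Γ) (hpd : IsProperlyDiscontinuous Γ)
    (hcomp : HasCompactQuotient Γ)
    (hrk : Module.finrank ℝ
      (Submodule.span ℝ {v : E3 | ∃ γ ∈ Γ, IsTranslationBy γ v}) = 2) :
    ∃ g ∈ Γ, Γ = Subgroup.closure
      ({γ : AffT | γ ∈ Γ ∧ ∃ v : E3, IsTranslationBy γ v} ∪ {g}) := by
  have hunip (γ) (hγ : γ ∈ Γ) : IsNilpotent ((γ.linear : E3 →ₗ[ℝ] E3) - 1) := by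
    obtain ⟨a, b, c, v, h⟩ := hlin γ hγ
    exact h.isNilpotent_linear_sub_one (isUpperTriangular_fin_three ..)
      (by simp [Fin.forall_fin_succ])
  have hcodim : finrank ℝ E3 ≤
      finrank ℝ (Submodule.span ℝ (translationVectors Γ : Set E3)) + 1 := by
    rw [← setOf_isTranslationBy_eq_translationVectors, hrk, finrank_fin_fun]
  rw [setOf_exists_isTranslationBy_eq_translationSubgroup]
  exact stmt_13_general Γ hunip hpd.finite_norm_apply_zero_le hcodim
end
end

section
/- Let A = [[a,b],[c,d]] ∈ SL₂(ℤ). Let Γ be the group of affine transformations of ℝ³ generated by g = ([[1,0,0],[0,a,b],[0,c,d]], (1,0,0)) and the pure translations t₁ = (I,(0,1,0)) and t₂ = (I,(0,0,1)). Then Γ acts freely and properly discontinuously on ℝ³ and the orbit space ℝ³/Γ is compact. -/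
open Matrix

noncomputable section

/-!
Let `B` be the linear part of `g`, a unimodular integer matrix which preserves the coordinate `i₀`
that `g` increases by `1`. The maps `x ↦ B ^ v i₀ x + v` with `v ∈ ℤ^ι` then form a group, and this
group is exactly `Γ`. If such a map fixes a point, then `v i₀ = 0`, so it is a translation and
`v = 0`. If it moves a point of `K` into `L`, then `v i₀` is bounded, so there are finitely many
possibilities for `B ^ v i₀`, and for each of them `v` is a lattice point in a compact set. Finally,
every point is carried into the unit cube by some `v`: first fix `v i₀` to adjust the coordinate
`i₀`, then adjust the others by translations.
-/

open scoped Pointwise MatrixGroups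

theorem finite_setOf_intCast_mem_of_isCompact {ι : Type*} [Finite ι] {K : Set (ι → ℝ)}
    (hK : IsCompact K) : {v : ι → ℤ | (fun i ↦ (v i : ℝ)) ∈ K}.Finite :=
  ((Topology.IsClosedEmbedding.piMap fun _ : ι ↦
    Int.isClosedEmbedding_coe_real).isCompact_preimage hK).finite_of_discrete

theorem isCompact_sub {G : Type*} [AddGroup G] [TopologicalSpace G] [IsTopologicalAddGroup G]
    {s t : Set G} (hs : IsCompact s) (ht : IsCompact t) : IsCompact (s - t) :=
  sub_eq_add_neg s t ▸ hs.add ht.neg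

theorem compactSpace_quot_of_isCompact {X : Type*} [TopologicalSpace X] {r : X → X → Prop}
    {K : Set X} (hK : IsCompact K) (hr : ∀ x, ∃ y ∈ K, r x y) : CompactSpace (Quot r) := by
  have hsurj : Quot.mk r '' K = Set.univ := by
    refine Set.eq_univ_of_forall (Quot.ind fun x ↦ ?_)
    obtain ⟨y, hy, hxy⟩ := hr x
    exact ⟨y, hy, (Quot.sound hxy).symm⟩
  exact ⟨hsurj ▸ hK.image continuous_quot_mk⟩

theorem constVAdd_mem_of_forall_single_mem {k ι : Type*} [Ring k] [Finite ι]
    [DecidableEq ι] {Γ : Subgroup ((ι → k) ≃ᵃ[k] (ι → k))} {s : Set ι}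
    (hΓ : ∀ i ∈ s, AffineEquiv.constVAdd k (ι → k) (Pi.single i 1) ∈ Γ)
    {v : ι → ℤ} (hv : ∀ i ∉ s, v i = 0) :
    AffineEquiv.constVAdd k (ι → k) (fun i ↦ (v i : k)) ∈ Γ := by
  have := Fintype.ofFinite ι
  let translations : AddSubgroup (ι → k) :=
    (Γ.comap (AffineEquiv.constVAddHom k (ι → k))).toAddSubgroup'
  have hsum : (fun i ↦ (v i : k)) = ∑ i, v i • (Pi.single i 1 : ι → k) := by
    ext j
    simp [Pi.single_apply]
  change (fun i ↦ (v i : k)) ∈ translations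
  rw [hsum]
  refine translations.sum_mem fun i _ ↦ ?_
  by_cases hi : i ∈ s
  · exact translations.zsmul_mem (hΓ i hi) (v i)
  · rw [hv i hi, zero_smul]
    exact translations.zero_mem

section Suspension

variable {ι : Type*} [Fintype ι] [DecidableEq ι]

theorem row_zpow_eq_single {R : Type*} [CommRing R] {B : GL ι R} {i₀ : ι}
    (hB : B.val i₀ = Pi.single i₀ 1) (n : ℤ) : (B ^ n).val i₀ = Pi.single i₀ 1 := by
  have row_mul (C D : GL ι R) : (C * D).val i₀ = C.val i₀ ᵥ* D.val := rfl
  refine zpow_induction_right (P := fun C : GL ι R ↦ C.val i₀ = Pi.single i₀ 1) ?_ ?_ ?_ n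
  · ext j
    simp [Matrix.one_apply, Pi.single_apply, eq_comm]
  · intro C hC
    rw [row_mul, hC, Matrix.single_one_vecMul]
    exact hB
  · intro C hC
    rw [row_mul, hC, ← hB, ← row_mul, mul_inv_cancel]
    ext j
    simp [hB, Matrix.one_apply, Pi.single_apply, eq_comm]

theorem mulVec_apply_of_row {R : Type*} [NonAssocSemiring R] {M : Matrix ι ι R} {i₀ : ι}
    (hM : M i₀ = Pi.single i₀ 1) (v : ι → R) : (M *ᵥ v) i₀ = v i₀ := by
  rw [Matrix.mulVec, hM, single_one_dotProduct]

/-- The action of `GL(ι, ℤ)` on `ℝ^ι` by matrix multiplication. -/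
def realAction : GL ι ℤ →* ((ι → ℝ) ≃ₗ[ℝ] (ι → ℝ)) :=
  (LinearMap.GeneralLinearGroup.generalLinearEquiv ℝ (ι → ℝ)).toMonoidHom.comp
    (Matrix.GeneralLinearGroup.toLin.toMonoidHom.comp
      (Matrix.GeneralLinearGroup.map (Int.castRingHom ℝ)))

theorem realAction_apply (B : GL ι ℤ) (x : ι → ℝ) :
    realAction B x = B.val.map (↑) *ᵥ x := rfl

theorem realAction_intCast (B : GL ι ℤ) (v : ι → ℤ) :
    realAction B (fun i ↦ (v i : ℝ)) = fun i ↦ (((B.val *ᵥ v) i : ℤ) : ℝ) := by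
  ext i
  exact ((Int.castRingHom ℝ).map_mulVec B.val v i).symm

theorem realAction_apply_of_row {B : GL ι ℤ} {i₀ : ι} (hB : B.val i₀ = Pi.single i₀ 1)
    (x : ι → ℝ) : realAction B x i₀ = x i₀ :=
  mulVec_apply_of_row (by ext j; simp [hB, Pi.single_apply]) x

/-- The affine map `x ↦ B ^ v i₀ x + v`. The coordinate `i₀` of the vector part determines the power
of `B`, so that `v` alone parametrizes the suspension group of `B` in the direction `i₀`. -/
def suspensionMap (B : GL ι ℤ) (i₀ : ι) (v : ι → ℤ) : (ι → ℝ) ≃ᵃ[ℝ] (ι → ℝ) :=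
  AffineEquiv.constVAdd ℝ (ι → ℝ) (fun i ↦ (v i : ℝ)) * (realAction (B ^ v i₀)).toAffineEquiv

theorem suspensionMap_apply (B : GL ι ℤ) (i₀ : ι) (v : ι → ℤ) (x : ι → ℝ) :
    suspensionMap B i₀ v x = realAction (B ^ v i₀) x + fun i ↦ (v i : ℝ) :=
  add_comm _ _

theorem suspensionMap_eq_constVAdd (B : GL ι ℤ) {i₀ : ι} {v : ι → ℤ} (hv : v i₀ = 0) :
    suspensionMap B i₀ v = AffineEquiv.constVAdd ℝ (ι → ℝ) (fun i ↦ (v i : ℝ)) := by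
  ext1 x
  simp [suspensionMap_apply, hv, add_comm]

theorem suspensionMap_zero (B : GL ι ℤ) (i₀ : ι) : suspensionMap B i₀ 0 = 1 := by
  ext1 x
  simp [suspensionMap_apply, ← Pi.zero_def]

theorem suspensionMap_mul {B : GL ι ℤ} {i₀ : ι} (hB : B.val i₀ = Pi.single i₀ 1)
    (v w : ι → ℤ) :
    suspensionMap B i₀ v * suspensionMap B i₀ w =
      suspensionMap B i₀ (v + (B ^ v i₀).val *ᵥ w) := by
  have hi₀ : (v + (B ^ v i₀).val *ᵥ w) i₀ = v i₀ + w i₀ := by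
    rw [Pi.add_apply, mulVec_apply_of_row (row_zpow_eq_single hB _)]
  ext1 x
  rw [AffineEquiv.coe_mul, Function.comp_apply]
  simp only [suspensionMap_apply, hi₀, _root_.zpow_add, map_mul, LinearEquiv.mul_apply, map_add,
    realAction_intCast]
  ext i
  simp only [Pi.add_apply, Int.cast_add]
  ring

theorem suspensionMap_mem_of_generators_mem {Γ : Subgroup ((ι → ℝ) ≃ᵃ[ℝ] (ι → ℝ))} {B : GL ι ℤ}
    {i₀ : ι} {u : ι → ℤ} (hB : B.val i₀ = Pi.single i₀ 1) (hu : u i₀ = 1)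
    (hsusp : suspensionMap B i₀ u ∈ Γ)
    (htrans : ∀ i ≠ i₀, AffineEquiv.constVAdd ℝ (ι → ℝ) (Pi.single i 1) ∈ Γ) (v : ι → ℤ) :
    suspensionMap B i₀ v ∈ Γ := by
  have step_mem_iff (w : ι → ℤ) :
      suspensionMap B i₀ (w + (B ^ w i₀).val *ᵥ u) ∈ Γ ↔ suspensionMap B i₀ w ∈ Γ := by
    rw [← suspensionMap_mul hB, Γ.mul_mem_cancel_right hsusp]
  have step_apply (n : ℤ) : ((B ^ n).val *ᵥ u) i₀ = 1 := by
    rw [mulVec_apply_of_row (row_zpow_eq_single hB _), hu]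
  induction hn : v i₀ using Int.induction_on generalizing v with
  | zero =>
    rw [suspensionMap_eq_constVAdd B hn]
    refine constVAdd_mem_of_forall_single_mem (s := {i₀}ᶜ) htrans fun i hi ↦ ?_
    rwa [Set.notMem_compl_iff.1 hi]
  | succ n ih =>
    have hn' : (v - (B ^ (n : ℤ)).val *ᵥ u) i₀ = n := by
      rw [Pi.sub_apply, step_apply, hn, add_sub_cancel_right]
    have hmem := (step_mem_iff _).2 (ih _ hn')
    rwa [hn', sub_add_cancel] at hmem
  | pred n ih =>
    refine (step_mem_iff v).1 (ih (v + (B ^ v i₀).val *ᵥ u) ?_)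
    rw [Pi.add_apply, step_apply, hn, sub_add_cancel]

/-- The suspension of `B` in the direction `i₀`: the group of all maps `x ↦ B ^ v i₀ x + v` with
`v ∈ ℤ^ι`. Row `i₀` of `B` has to be that of the identity, so that `B` preserves the coordinate
`i₀` and the exponents add up under composition. -/
def suspensionGroup (B : GL ι ℤ) (i₀ : ι) (hB : B.val i₀ = Pi.single i₀ 1) :
    Subgroup ((ι → ℝ) ≃ᵃ[ℝ] (ι → ℝ)) where
  carrier := Set.range (suspensionMap B i₀)
  one_mem' := ⟨0, suspensionMap_zero B i₀⟩
  mul_mem' := by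
    rintro _ _ ⟨v, rfl⟩ ⟨w, rfl⟩
    exact ⟨_, (suspensionMap_mul hB v w).symm⟩
  inv_mem' := by
    rintro _ ⟨v, rfl⟩
    refine ⟨-((B ^ (-v i₀)).val *ᵥ v), eq_inv_of_mul_eq_one_left ?_⟩
    have hi₀ : (-((B ^ (-v i₀)).val *ᵥ v)) i₀ = -v i₀ := by
      rw [Pi.neg_apply, mulVec_apply_of_row (row_zpow_eq_single hB _)]
    rw [suspensionMap_mul hB, hi₀, neg_add_cancel, suspensionMap_zero]

variable {B : GL ι ℤ} {i₀ : ι} {hB : B.val i₀ = Pi.single i₀ 1}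

theorem eq_one_of_mem_suspensionGroup_of_apply_eq {γ : (ι → ℝ) ≃ᵃ[ℝ] (ι → ℝ)}
    (hγ : γ ∈ suspensionGroup B i₀ hB) {x : ι → ℝ} (hx : γ x = x) : γ = 1 := by
  obtain ⟨v, rfl⟩ := hγ
  rw [suspensionMap_apply] at hx
  have hi₀ : v i₀ = 0 := by
    have hx₀ := congrFun hx i₀
    rwa [Pi.add_apply, realAction_apply_of_row (row_zpow_eq_single hB _), add_eq_left,
      Int.cast_eq_zero] at hx₀
  have hv : v = 0 := by
    ext i
    simpa [hi₀] using congrFun hx i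
  rw [hv, suspensionMap_zero]

variable (hB)

theorem finite_suspensionGroup_image_inter_nonempty {K L : Set (ι → ℝ)} (hK : IsCompact K)
    (hL : IsCompact L) :
    {γ | γ ∈ suspensionGroup B i₀ hB ∧ (γ '' K ∩ L).Nonempty}.Finite := by
  let heights : Set ℤ := {n | (n : ℝ) ∈ (fun x ↦ x i₀) '' L - (fun x ↦ x i₀) '' K}
  let vectors (n : ℤ) : Set (ι → ℤ) := {v | (fun i ↦ (v i : ℝ)) ∈ L - realAction (B ^ n) '' K}
  have finite_heights : heights.Finite := (Int.isClosedEmbedding_coe_real.isCompact_preimage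
    (isCompact_sub (hL.image (continuous_apply i₀))
      (hK.image (continuous_apply i₀)))).finite_of_discrete
  have finite_vectors (n : ℤ) : (vectors n).Finite := finite_setOf_intCast_mem_of_isCompact
    (isCompact_sub hL (hK.image (realAction (B ^ n)).toLinearMap.continuous_of_finiteDimensional))
  refine (finite_heights.biUnion fun n _ ↦
    (finite_vectors n).image (suspensionMap B i₀)).subset ?_
  rintro _ ⟨⟨v, rfl⟩, _, ⟨x, hx, rfl⟩, hxL⟩
  have hv : (fun i ↦ (v i : ℝ)) = suspensionMap B i₀ v x - realAction (B ^ v i₀) x := by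
    rw [suspensionMap_apply, add_sub_cancel_left]
  have hv₀ : (v i₀ : ℝ) = suspensionMap B i₀ v x i₀ - x i₀ := by
    have hv' := congrFun hv i₀
    rwa [Pi.sub_apply, realAction_apply_of_row (row_zpow_eq_single hB _)] at hv'
  refine Set.mem_biUnion (x := v i₀) ?_ ⟨v, ?_, rfl⟩
  · exact ⟨_, ⟨_, hxL, rfl⟩, _, ⟨x, hx, rfl⟩, hv₀.symm⟩
  · exact ⟨_, hxL, _, ⟨x, hx, rfl⟩, hv.symm⟩

theorem exists_mem_suspensionGroup_apply_mem_Icc (x : ι → ℝ) :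
    ∃ γ ∈ suspensionGroup B i₀ hB, γ x ∈ Set.Icc (0 : ι → ℝ) 1 := by
  let y := realAction (B ^ (-⌊x i₀⌋)) x
  let v : ι → ℤ := fun i ↦ -⌊y i⌋
  have hv : v i₀ = -⌊x i₀⌋ := by
    simp only [v, y, realAction_apply_of_row (row_zpow_eq_single hB _)]
  have hfract : suspensionMap B i₀ v x = fun i ↦ Int.fract (y i) := by
    ext i
    rw [suspensionMap_apply, hv]
    simp [v, y, Int.fract, sub_eq_add_neg]
  refine ⟨_, ⟨v, rfl⟩, ?_⟩
  rw [hfract]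
  exact ⟨fun i ↦ Int.fract_nonneg _, fun i ↦ (Int.fract_lt_one _).le⟩

theorem closure_eq_suspensionGroup {u : ι → ℤ} (hu : u i₀ = 1) :
    Subgroup.closure (insert (suspensionMap B i₀ u)
      ((fun i ↦ AffineEquiv.constVAdd ℝ (ι → ℝ) (Pi.single i 1)) '' {i₀}ᶜ)) =
      suspensionGroup B i₀ hB := by
  apply le_antisymm
  · rw [Subgroup.closure_le, Set.insert_subset_iff]
    refine ⟨⟨u, rfl⟩, ?_⟩
    rintro _ ⟨i, hi, rfl⟩
    refine ⟨Pi.single i 1, ?_⟩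
    rw [suspensionMap_eq_constVAdd B (Pi.single_eq_of_ne (Ne.symm hi) 1)]
    congr 1
    ext j
    simp [Pi.single_apply]
  · rintro _ ⟨v, rfl⟩
    refine suspensionMap_mem_of_generators_mem hB hu
      (Subgroup.subset_closure (Set.mem_insert _ _)) (fun i hi ↦ ?_) v
    exact Subgroup.subset_closure (Set.mem_insert_of_mem _ ⟨i, hi, rfl⟩)

theorem stmt_14_general {M : Matrix ι ι ℤ} (hM : IsUnit M.det) {i₀ : ι}
    (hrow : M i₀ = Pi.single i₀ 1) {u : ι → ℤ} (hu : u i₀ = 1)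
    {g : (ι → ℝ) ≃ᵃ[ℝ] (ι → ℝ)} (hg : ∀ x, g x = M.map (↑) *ᵥ x + fun i ↦ (u i : ℝ))
    {Γ : Subgroup ((ι → ℝ) ≃ᵃ[ℝ] (ι → ℝ))}
    (hΓ : Γ = Subgroup.closure (insert g
      ((fun i ↦ AffineEquiv.constVAdd ℝ (ι → ℝ) (Pi.single i 1)) '' {i₀}ᶜ))) :
    (∀ γ ∈ Γ, (∃ x, γ x = x) → γ = 1) ∧
    (∀ K L : Set (ι → ℝ), IsCompact K → IsCompact L → {γ | γ ∈ Γ ∧ (γ '' K ∩ L).Nonempty}.Finite) ∧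
    CompactSpace (Quot fun x y : ι → ℝ ↦ ∃ γ ∈ Γ, γ x = y) := by
  obtain ⟨B, rfl⟩ := (Matrix.isUnit_iff_isUnit_det M).2 hM
  have hg' : g = suspensionMap B i₀ u := by
    ext1 x
    rw [hg, suspensionMap_apply, hu, _root_.zpow_one, realAction_apply]
  rw [hg', closure_eq_suspensionGroup hrow hu] at hΓ
  subst hΓ
  refine ⟨fun γ hγ ⟨x, hx⟩ ↦ eq_one_of_mem_suspensionGroup_of_apply_eq hγ hx,
    fun _ _ ↦ finite_suspensionGroup_image_inter_nonempty hrow,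
    compactSpace_quot_of_isCompact (K := Set.Icc 0 1) isCompact_Icc fun x ↦ ?_⟩
  obtain ⟨γ, hγ, hγx⟩ := exists_mem_suspensionGroup_apply_mem_Icc hrow x
  exact ⟨γ x, hγx, γ, hγ, rfl⟩

end Suspension

theorem IsTranslationBy.eq_constVAdd {γ : AffT} {v : E3} (h : IsTranslationBy γ v) :
    γ = AffineEquiv.constVAdd ℝ E3 v := by
  ext1 x
  exact (h x).trans (add_comm _ _)

theorem insert_constVAdd_single_eq {g t₁ t₂ : AffT} (ht₁ : IsTranslationBy t₁ ![0, 1, 0])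
    (ht₂ : IsTranslationBy t₂ ![0, 0, 1]) :
    insert g ((fun i ↦ AffineEquiv.constVAdd ℝ E3 (Pi.single i 1)) '' {0}ᶜ) = {g, t₁, t₂} := by
  have hcompl : ({0}ᶜ : Set (Fin 3)) = {1, 2} := by ext i; fin_cases i <;> simp
  have he₁ : (Pi.single 1 1 : E3) = ![0, 1, 0] := by ext i; fin_cases i <;> rfl
  have he₂ : (Pi.single 2 1 : E3) = ![0, 0, 1] := by ext i; fin_cases i <;> rfl
  rw [hcompl, Set.image_pair, he₁, he₂, ← ht₁.eq_constVAdd, ← ht₂.eq_constVAdd]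

/-- the suspension of `A ∈ SL₂(ℤ)` gives a free, properly discontinuous action
with compact quotient. -/
theorem stmt_14 (a b c d : ℤ) (hdet : a * d - b * c = 1)
    (g t₁ t₂ : AffT)
    (hg : HasForm g !![1, 0, 0; 0, (a : ℝ), (b : ℝ); 0, (c : ℝ), (d : ℝ)] ![1, 0, 0])
    (ht₁ : IsTranslationBy t₁ ![0, 1, 0])
    (ht₂ : IsTranslationBy t₂ ![0, 0, 1])
    (Γ : Subgroup AffT) (hΓ : Γ = Subgroup.closure {g, t₁, t₂}) :
    IsFreeAction Γ ∧ IsProperlyDiscontinuous Γ ∧ HasCompactQuotient Γ := by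
  refine stmt_14_general (M := !![1, 0, 0; 0, a, b; 0, c, d]) (i₀ := 0) (u := ![1, 0, 0])
    (by simp [Matrix.det_fin_three, hdet]) (by ext i; fin_cases i <;> rfl) rfl
    (fun x ↦ (hg x).trans ?_) (by rw [hΓ, insert_constVAdd_single_eq ht₁ ht₂])
  congr 2
  · ext i j
    fin_cases i <;> fin_cases j <;> simp
  · ext i
    fin_cases i <;> simp
end
end
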